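/- arXiv:1910.07950 — 6 statements merged into one kernel-verified Lean document; each statement's English description precedes it below -/
import Mathlib

section
/- Let G be a finite simple graph, and let (L,S,R) and (L*,S*,R*) be separation triples in G such that |S*| ≤ |S'| for every separation triple (L',S',R') of G (i.e., (L*,S*,R*) is an optimal separation triple). Suppose S ∩ R* = ∅, x ∈ S ∩ L*, and y ∈ L ∩ R*. Then: (1) N(L ∩ R*) ⊆ S* \ R; (2) S* is an (x,y)-vertex-cut in G; (3) S* ∩ R = ∅. -/
/-- A separation triple `(L, S, R)` in a graph `G`: a partition of the vertex set into
three sets with `L` and `R` nonempty and no edge between `L` and `R`. -/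
def IsSepTriple {V : Type*} (G : SimpleGraph V) (L S R : Finset V) : Prop :=
  L.Nonempty ∧ R.Nonempty ∧
    (∀ v, v ∈ L ∨ v ∈ S ∨ v ∈ R) ∧
    Disjoint L S ∧ Disjoint L R ∧ Disjoint S R ∧
    ∀ u ∈ L, ∀ v ∈ R, ¬ G.Adj u v

/-- `N(U)`: the set of vertices outside `U` adjacent to some vertex of `U`. -/
def setNbrs {V : Type*} (G : SimpleGraph V) (U : Finset V) : Set V :=
  {v | v ∉ U ∧ ∃ u ∈ U, G.Adj u v}

/-- Let `(L, S, R)` and `(L*, S*, R*)` be separation triples with `(L*, S*, R*)`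
optimal (i.e. `|S*| ≤ |S'|` for every separation triple `(L', S', R')`).
If `S ∩ R* = ∅`, `x ∈ S ∩ L*` and `y ∈ L ∩ R*`, then
(1) `N(L ∩ R*) ⊆ S* \ R`; (2) `S*` is an `(x, y)`-vertex-cut in `G`; and
(3) `S* ∩ R = ∅`. -/
theorem collection_of_facts {V : Type*} [Fintype V] [DecidableEq V]
    (G : SimpleGraph V) (L S R Ls Ss Rs : Finset V) (x y : V)
    (h1 : IsSepTriple G L S R) (h2 : IsSepTriple G Ls Ss Rs)
    (hopt : ∀ L' S' R' : Finset V, IsSepTriple G L' S' R' → Ss.card ≤ S'.card)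
    (hSR : S ∩ Rs = ∅) (hx : x ∈ S ∩ Ls) (hy : y ∈ L ∩ Rs) :
    setNbrs G (L ∩ Rs) ⊆ ↑(Ss \ R) ∧
    (∃ A B : Finset V, IsSepTriple G A Ss B ∧ x ∈ A ∧ y ∈ B) ∧
    Ss ∩ R = ∅ := by
  obtain ⟨-, -, c1, d1, d2, d3, e1⟩ := h1
  have h2c := h2
  obtain ⟨-, -, c2, f1, f2, f3, e2⟩ := h2
  rw [Finset.mem_inter] at hx hy
  rw [Finset.disjoint_left] at d1 d2 d3 f1 f2 f3
  have hSR' : ∀ v, v ∈ S → v ∉ Rs := by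
    intro v hv hv'
    have : v ∈ S ∩ Rs := Finset.mem_inter.2 ⟨hv, hv'⟩
    rw [hSR] at this
    exact absurd this (Finset.notMem_empty v)
  have key : ∀ u v, u ∈ L → u ∈ Rs → G.Adj u v → ¬ (v ∈ L ∧ v ∈ Rs) → v ∈ Ss ∧ v ∉ R := by
    intro u v hu hu' ha hv
    have hvR : v ∉ R := fun h => e1 u hu v h ha
    have hvL : v ∉ Ls := fun h => e2 v h u hu' ha.symm
    have := c1 v
    have := c2 v
    have := hSR' v
    tauto
  refine ⟨?_, ⟨Ls, Rs, h2c, hx.2, hy.2⟩, ?_⟩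
  · rintro v ⟨hv, u, hu, ha⟩
    rw [Finset.mem_inter] at hv hu
    have := key u v hu.1 hu.2 ha hv
    simpa using this
  · have ht : IsSepTriple G (L ∩ Rs) (Ss \ R) (Finset.univ \ ((L ∩ Rs) ∪ (Ss \ R))) := by
      refine ⟨⟨y, Finset.mem_inter.2 hy⟩, ⟨x, ?_⟩, ?_, ?_, ?_, ?_, ?_⟩
      · have := f1 hx.2
        have := f2 hx.2
        simp
        tauto
      · intro v
        simp
        tauto
      · rw [Finset.disjoint_left]
        intro v hv hv'
        exact f3 (Finset.mem_sdiff.1 hv').1 (Finset.mem_inter.1 hv).2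
      · rw [Finset.disjoint_left]
        intro v hv hv'
        exact (Finset.mem_sdiff.1 hv').2 (Finset.mem_union_left _ hv)
      · rw [Finset.disjoint_left]
        intro v hv hv'
        exact (Finset.mem_sdiff.1 hv').2 (Finset.mem_union_right _ hv)
      · intro u hu v hv ha
        rw [Finset.mem_inter] at hu
        have hv := (Finset.mem_sdiff.1 hv).2
        rw [Finset.mem_union, Finset.mem_inter, Finset.mem_sdiff] at hv
        have := key u v hu.1 hu.2 ha
        tauto
    have hle := hopt _ _ _ ht
    have heq : Ss \ R = Ss := Finset.eq_of_subset_of_card_le Finset.sdiff_subset hle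
    rw [← Finset.disjoint_iff_inter_eq_empty]
    exact Finset.sdiff_eq_self_iff_disjoint.1 heq
end

section
/- Let G be a finite simple graph on vertex set V, let 0 < φ ≤ 1 and c ≥ 1 be real numbers, and let (u_i, v_i), i ∈ I, be a finite family of pairs of vertices (the edges of a demand multigraph W) such that for every nonempty set A ⊆ V with |A| ≤ |V \ A|, the number of indices i with exactly one of u_i, v_i in A is at least φ·|A| (i.e., W has sparsity at least φ). Suppose that for each i there is a walk P_i in G from u_i to v_i such that every vertex of G lies on at most c of the walks P_i (i.e., W can be embedded into G with vertex congestion c). Then every separation triple (L,S,R) of G satisfies h(L,S,R) ≥ φ/(2c); that is, h(G) ≥ φ/(2c). -/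
theorem walk_stays {V : Type*} {G : SimpleGraph V} {L S R : Finset V}
    (h : IsSepTriple G L S R) {a b : V} (p : G.Walk a b)
    (hp : ∀ x ∈ p.support, x ∉ S) (ha : a ∈ L) : b ∈ L := by
  obtain ⟨-, -, hcov, -, -, -, hE⟩ := h
  induction p with
  | nil => exact ha
  | @cons x y z hxy q ih =>
    refine ih (fun w hw => hp w (by simp [hw])) ?_
    rcases hcov y with h | h | h
    · exact h
    · exact absurd h (hp y (by simp))
    · exact absurd hxy (hE _ ha _ h)

theorem sep_symm {V : Type*} {G : SimpleGraph V} {L S R : Finset V}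
    (h : IsSepTriple G L S R) : IsSepTriple G R S L := by
  obtain ⟨h1, h2, hcov, d1, d2, d3, hE⟩ := h
  refine ⟨h2, h1, fun v => ?_, d3.symm, d2.symm, d1.symm, fun a ha b hb hab => hE b hb a ha hab.symm⟩
  have := hcov v
  tauto

theorem core_bound {V : Type*} [Fintype V] [DecidableEq V]
    (G : SimpleGraph V) {I : Type*} [Fintype I] (u v : I → V) (φ c : ℝ)
    (hsparse : ∀ A : Finset V, A.Nonempty → A.card ≤ Aᶜ.card →
      φ * (A.card : ℝ) ≤
        ((Finset.univ.filter
          (fun i => (u i ∈ A ∧ v i ∉ A) ∨ (u i ∉ A ∧ v i ∈ A))).card : ℝ))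
    (P : ∀ i, G.Walk (u i) (v i))
    (hcong : ∀ x : V,
      ((Finset.univ.filter (fun i => x ∈ (P i).support)).card : ℝ) ≤ c)
    (L S R : Finset V) (h : IsSepTriple G L S R) (hle : L.card ≤ R.card) :
    φ * (L.card : ℝ) ≤ c * S.card := by
  classical
  have hRL : R ⊆ Lᶜ := fun x hx => by
    rw [Finset.mem_compl]
    exact fun hL => Finset.disjoint_left.mp h.2.2.2.2.1 hL hx
  refine (hsparse L h.1 (hle.trans (Finset.card_le_card hRL))).trans ?_
  have hsub : (Finset.univ.filter
      (fun i => (u i ∈ L ∧ v i ∉ L) ∨ (u i ∉ L ∧ v i ∈ L))) ⊆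
      S.biUnion (fun x => Finset.univ.filter (fun i => x ∈ (P i).support)) := by
    intro i hi
    simp only [Finset.mem_filter, Finset.mem_univ, true_and, Finset.mem_biUnion] at hi ⊢
    by_contra hcon
    have hp : ∀ x ∈ (P i).support, x ∉ S := fun x hx hS => hcon ⟨x, hS, hx⟩
    rcases hi with ⟨h1, h2⟩ | ⟨h1, h2⟩
    · exact h2 (walk_stays h (P i) hp h1)
    · exact h1 (walk_stays h (P i).reverse (by simpa using hp) h2)
  calc _ ≤ ((S.biUnion (fun x => Finset.univ.filter
          (fun i => x ∈ (P i).support))).card : ℝ) := by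
        exact_mod_cast Finset.card_le_card hsub
    _ ≤ ∑ x ∈ S, ((Finset.univ.filter (fun i => x ∈ (P i).support)).card : ℝ) := by
        exact_mod_cast Finset.card_biUnion_le
    _ ≤ ∑ x ∈ S, c := Finset.sum_le_sum fun x _ => hcong x
    _ = c * S.card := by simp [mul_comm]

/-- **Expander embedding lower-bounds vertex expansion.**
Let `(u i, v i)`, `i ∈ I`, be the edges of a demand multigraph `W` of sparsity at
least `φ` (every nonempty `A` with `|A| ≤ |Aᶜ|` is crossed by at least `φ·|A|`
demands), and suppose each demand can be routed by a walk `P i` in `G` so that every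
vertex lies on at most `c` of the walks.  Then every separation triple `(L, S, R)` of
`G` has vertex expansion `h(L, S, R) = |S| / (min(|L|, |R|) + |S|) ≥ φ / (2c)`. -/
theorem embedding_lower_bounds_expansion {V : Type*} [Fintype V] [DecidableEq V]
    (G : SimpleGraph V) {I : Type*} [Fintype I] (u v : I → V) (φ c : ℝ)
    (hφ0 : 0 < φ) (hφ1 : φ ≤ 1) (hc : 1 ≤ c)
    (hsparse : ∀ A : Finset V, A.Nonempty → A.card ≤ Aᶜ.card →
      φ * (A.card : ℝ) ≤
        ((Finset.univ.filter
          (fun i => (u i ∈ A ∧ v i ∉ A) ∨ (u i ∉ A ∧ v i ∈ A))).card : ℝ))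
    (P : ∀ i, G.Walk (u i) (v i))
    (hcong : ∀ x : V,
      ((Finset.univ.filter (fun i => x ∈ (P i).support)).card : ℝ) ≤ c) :
    ∀ L S R : Finset V, IsSepTriple G L S R →
      φ / (2 * c) ≤ (S.card : ℝ) / ((min L.card R.card : ℝ) + (S.card : ℝ)) := by
  intro L S R h
  have hL : (1 : ℝ) ≤ L.card := by exact_mod_cast h.1.card_pos
  have hR : (1 : ℝ) ≤ R.card := by exact_mod_cast h.2.1.card_pos
  have hS : (0 : ℝ) ≤ S.card := Nat.cast_nonneg _
  have hmin : (1 : ℝ) ≤ min (L.card : ℝ) (R.card : ℝ) := le_min hL hR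
  have key : φ * min (L.card : ℝ) (R.card : ℝ) ≤ c * S.card := by
    rcases le_total L.card R.card with hle | hle
    · rw [min_eq_left (by exact_mod_cast hle)]
      exact core_bound G u v φ c hsparse P hcong L S R h hle
    · rw [min_eq_right (by exact_mod_cast hle)]
      exact core_bound G u v φ c hsparse P hcong R S L (sep_symm h) hle
  rw [div_le_div_iff₀ (by linarith) (by linarith)]
  have : φ * (S.card : ℝ) ≤ c * S.card :=
    mul_le_mul_of_nonneg_right (hφ1.trans hc) hS
  linarith
end

section
/- Let G = (V,E) be a finite graph with m edges, let φ1, φ2 ∈ (0,1) and c ≥ 4 be real numbers, and let S ⊆ V be a ((c·φ2 + φ1)/(c − 1))-near-expander φ1-conductance cut of G. Then S is a (φ2, c)-most-balanced φ1-conductance cut of G; that is, every set T ⊆ V with vol(T) ≤ m and conductance Φ(T) ≤ φ2 satisfies vol(T) ≤ c·vol(S). -/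
/-- The volume of a vertex set: the sum of degrees of its vertices. -/
def gVol {V : Type*} [Fintype V] (G : SimpleGraph V) [DecidableRel G.Adj]
    (U : Finset V) : ℕ :=
  ∑ x ∈ U, G.degree x

/-- `|E(A, B)|`: the number of edges with one endpoint in `A` and the other in `B`
(counted as ordered pairs with the first endpoint in `A`; for disjoint `A`, `B`
this is exactly the number of crossing edges). -/
def cutBetween {V : Type*} [Fintype V] [DecidableEq V] (G : SimpleGraph V)
    [DecidableRel G.Adj] (A B : Finset V) : ℕ :=
  (Finset.univ.filter (fun p : V × V => p.1 ∈ A ∧ p.2 ∈ B ∧ G.Adj p.1 p.2)).card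

/-- Conductance of a cut `S`: `|E(S, V \ S)| / min(vol S, vol (V \ S))`. -/
noncomputable def conduct {V : Type*} [Fintype V] [DecidableEq V] (G : SimpleGraph V)
    [DecidableRel G.Adj] (S : Finset V) : ℝ :=
  (cutBetween G S Sᶜ : ℝ) / (min (gVol G S) (gVol G Sᶜ) : ℝ)

/-- `A` is a nearly `φ`-expander in `G`: every `T ⊆ A` with `vol T ≤ vol A / 2`
satisfies `|E(T, V \ T)| ≥ φ · vol T`. -/
def NearlyExpander {V : Type*} [Fintype V] [DecidableEq V] (G : SimpleGraph V)
    [DecidableRel G.Adj] (φ : ℝ) (A : Finset V) : Prop :=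
  ∀ T ⊆ A, (gVol G T : ℝ) ≤ (gVol G A : ℝ) / 2 →
    φ * (gVol G T : ℝ) ≤ (cutBetween G T Tᶜ : ℝ)

theorem cut_le_vol {V : Type*} [Fintype V] [DecidableEq V] (G : SimpleGraph V)
    [DecidableRel G.Adj] (A B : Finset V) : cutBetween G A B ≤ gVol G A := by
  have h : gVol G A = (A.sigma (fun x => G.neighborFinset x)).card := by
    simp [gVol, Finset.card_sigma]
  rw [h, cutBetween]
  refine Finset.card_le_card_of_injOn (fun p => ⟨p.1, p.2⟩) ?_ ?_
  · intro p hp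
    simp at hp ⊢
    exact ⟨hp.1, hp.2.2⟩
  · rintro ⟨a, b⟩ _ ⟨c, d⟩ _ h
    simpa using h

theorem cut_comm {V : Type*} [Fintype V] [DecidableEq V] (G : SimpleGraph V)
    [DecidableRel G.Adj] (A B : Finset V) : cutBetween G A B = cutBetween G B A := by
  unfold cutBetween
  refine Finset.card_bij (fun p _ => p.swap) ?_ ?_ ?_
  · intro p hp
    simp at hp ⊢
    exact ⟨hp.2.1, hp.1, hp.2.2.symm⟩
  · intro p _ q _ h
    exact Prod.swap_injective h
  · intro p hp
    refine ⟨p.swap, ?_, by simp⟩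
    simp at hp ⊢
    exact ⟨hp.2.1, hp.1, hp.2.2.symm⟩

theorem cut_compl {V : Type*} [Fintype V] [DecidableEq V] (G : SimpleGraph V)
    [DecidableRel G.Adj] (A : Finset V) : cutBetween G Aᶜ Aᶜᶜ = cutBetween G A Aᶜ := by
  rw [compl_compl, cut_comm]

theorem cut_inter {V : Type*} [Fintype V] [DecidableEq V] (G : SimpleGraph V)
    [DecidableRel G.Adj] (A B : Finset V) :
    cutBetween G (A ∩ B) (A ∩ B)ᶜ ≤ cutBetween G A Aᶜ + cutBetween G B Bᶜ := by
  unfold cutBetween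
  refine le_trans (Finset.card_le_card ?_) (Finset.card_union_le _ _)
  intro p hp
  simp at hp ⊢
  tauto

theorem vol_compl {V : Type*} [Fintype V] [DecidableEq V] (G : SimpleGraph V)
    [DecidableRel G.Adj] (A : Finset V) : gVol G A + gVol G Aᶜ = 2 * G.edgeFinset.card := by
  unfold gVol
  rw [Finset.sum_add_sum_compl, G.sum_degrees_eq_twice_card_edges]

theorem vol_split {V : Type*} [Fintype V] [DecidableEq V] (G : SimpleGraph V)
    [DecidableRel G.Adj] (A B : Finset V) : gVol G A = gVol G (A ∩ B) + gVol G (A ∩ Bᶜ) := by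
  unfold gVol
  rw [← Finset.sum_union]
  · rw [← Finset.inter_union_distrib_left, Finset.union_compl, Finset.inter_univ]
  · rw [Finset.disjoint_left]
    intro x hx hy
    simp at hx hy
    exact hy.2 hx.2

theorem vol_mono {V : Type*} [Fintype V] (G : SimpleGraph V)
    [DecidableRel G.Adj] {A B : Finset V} (h : A ⊆ B) : gVol G A ≤ gVol G B :=
  Finset.sum_le_sum_of_subset h

theorem cut_le_of_conduct {V : Type*} [Fintype V] [DecidableEq V] (G : SimpleGraph V)
    [DecidableRel G.Adj] (A : Finset V) (φ : ℝ) (hA : gVol G A ≤ G.edgeFinset.card)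
    (h : conduct G A ≤ φ) : (cutBetween G A Aᶜ : ℝ) ≤ φ * gVol G A := by
  have h1 := vol_compl G A
  have h2 : (gVol G A : ℝ) ≤ gVol G Aᶜ := by
    have : gVol G A ≤ gVol G Aᶜ := by omega
    exact_mod_cast this
  have h3 := cut_le_vol G A Aᶜ
  unfold conduct at h
  rw [min_eq_left h2] at h
  rcases Nat.eq_zero_or_pos (gVol G A) with h0 | h0
  · have : cutBetween G A Aᶜ = 0 := by omega
    simp [this, h0]
  · rwa [div_le_iff₀ (by exact_mod_cast h0)] at h

/-- **Near-expander cuts are most-balanced.**  Let `G` have `m` edges, let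
`φ1, φ2 ∈ (0,1)`, `c ≥ 4`, and let `S` be a
`((c·φ2 + φ1)/(c − 1))`-near-expander `φ1`-conductance cut: `vol S ≤ m`,
`Φ(S) ≤ φ1`, and either `vol S ≥ m/4` or `V \ S` is a nearly
`((c·φ2 + φ1)/(c − 1))`-expander.  Then `S` is a `(φ2, c)`-most-balanced
`φ1`-conductance cut: every `T` with `vol T ≤ m` and `Φ(T) ≤ φ2` has
`vol T ≤ c · vol S`. -/
theorem near_expander_most_balanced {V : Type*} [Fintype V] [DecidableEq V]
    (G : SimpleGraph V) [DecidableRel G.Adj] (φ1 φ2 c : ℝ)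
    (hφ1 : 0 < φ1) (hφ1' : φ1 < 1) (hφ2 : 0 < φ2) (hφ2' : φ2 < 1) (hc : 4 ≤ c)
    (S : Finset V)
    (hvolS : gVol G S ≤ G.edgeFinset.card)
    (hcond : conduct G S ≤ φ1)
    (hne : (G.edgeFinset.card : ℝ) / 4 ≤ (gVol G S : ℝ) ∨
      NearlyExpander G ((c * φ2 + φ1) / (c - 1)) Sᶜ) :
    ∀ T : Finset V, gVol G T ≤ G.edgeFinset.card → conduct G T ≤ φ2 →
      (gVol G T : ℝ) ≤ c * (gVol G S : ℝ) := by
  intro T hT hcT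
  have hs0 : (0 : ℝ) ≤ gVol G S := Nat.cast_nonneg _
  have hT' : (gVol G T : ℝ) ≤ G.edgeFinset.card := by exact_mod_cast hT
  rcases hne with h4 | hexp
  · nlinarith
  by_contra hlt
  push Not at hlt
  have hS1 := cut_le_of_conduct G S φ1 hvolS hcond
  have hT1 := cut_le_of_conduct G T φ2 hT hcT
  -- any admissible set of volume at least `vol T - vol S` gives a contradiction
  have key : ∀ U ⊆ Sᶜ, (gVol G U : ℝ) ≤ (gVol G Sᶜ : ℝ) / 2 →
      (gVol G T : ℝ) - gVol G S ≤ gVol G U →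
      (cutBetween G U Uᶜ : ℝ) ≤ cutBetween G S Sᶜ + cutBetween G T Tᶜ → False := by
    intro U hU h1 h2 h3
    have h5 := hexp U hU h1
    have hc1 : 0 < c - 1 := by linarith
    have hpos : 0 ≤ c * φ2 + φ1 := by positivity
    have h6 : (c * φ2 + φ1) / (c - 1) * ((gVol G T : ℝ) - gVol G S)
        ≤ φ1 * gVol G S + φ2 * gVol G T := by
      have := mul_le_mul_of_nonneg_left h2 (div_nonneg hpos hc1.le)
      linarith
    rw [div_mul_eq_mul_div, div_le_iff₀ hc1] at h6
    have h7 := mul_pos (add_pos hφ1 hφ2) (sub_pos.2 hlt)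
    nlinarith
  have a1 := vol_compl G S
  have a2 := vol_split G T S
  have a3 := vol_split G Sᶜ T
  have a4 : gVol G (T ∩ S) ≤ gVol G S := vol_mono G Finset.inter_subset_right
  have a5 : gVol G (Sᶜ ∩ T) ≤ gVol G T := vol_mono G Finset.inter_subset_right
  rw [Finset.inter_comm T Sᶜ] at a2
  rify at a1 a2 a3 a4 a5
  by_cases hh : (gVol G (Sᶜ ∩ T) : ℝ) ≤ (gVol G Sᶜ : ℝ) / 2
  · refine key _ Finset.inter_subset_left hh (by linarith) ?_
    have := cut_inter G Sᶜ T
    rw [cut_compl] at this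
    exact_mod_cast this
  · refine key (Sᶜ ∩ Tᶜ) Finset.inter_subset_left (by linarith) (by linarith) ?_
    have := cut_inter G Sᶜ Tᶜ
    rw [cut_compl, cut_compl] at this
    exact_mod_cast this
end

section
/- Let G = (V,E) be a finite graph in which every vertex has degree at least 1, let p : V → ℝ be any function, and for a real number t let V_{≥t} = {v ∈ V : p(v)/deg(v) ≥ t}. Suppose t_med < t are real numbers such that at least half of the edges in E(V_{≥t}, V \ V_{≥t}) have their endpoint outside V_{≥t} lying in V_{≥t_med}. Then vol(V_{≥t_med}) ≥ vol(V_{≥t}) + |E(V_{≥t}, V \ V_{≥t})| / 2. -/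
/-- The level set `V_{≥ t} = {v : p(v)/deg(v) ≥ t}`. -/
noncomputable def levelSet {V : Type*} [Fintype V] (G : SimpleGraph V)
    [DecidableRel G.Adj] (p : V → ℝ) (t : ℝ) : Finset V :=
  Finset.univ.filter (fun x => t ≤ p x / (G.degree x : ℝ))

theorem cutBetween_le_gVol_aux {V : Type*} [Fintype V] [DecidableEq V] (G : SimpleGraph V)
    [DecidableRel G.Adj] (A B : Finset V) : cutBetween G A B ≤ gVol G B := by
  unfold cutBetween gVol
  rw [Finset.card_eq_sum_card_fiberwise (f := Prod.snd) (t := B)]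
  · refine Finset.sum_le_sum fun b _ => ?_
    rw [← SimpleGraph.card_neighborFinset_eq_degree]
    refine Finset.card_le_card_of_injOn Prod.fst ?_ ?_
    · rintro ⟨x, y⟩ h
      simp at h
      obtain ⟨⟨_, _, h⟩, rfl⟩ := h
      simpa using h.symm
    · rintro ⟨x, y⟩ h ⟨x', y'⟩ h' e
      simp at h h' e
      simp [e, h.2, h'.2]
  · rintro ⟨x, y⟩ h
    simp at h
    simpa using h.2.1

/-- **Median expansion.**  Suppose every vertex has degree at least `1`,
`t_med < t`, and at least half of the edges of `E(V_{≥t}, V \ V_{≥t})` have their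
endpoint outside `V_{≥t}` lying in `V_{≥t_med}`.  Then
`vol(V_{≥t_med}) ≥ vol(V_{≥t}) + |E(V_{≥t}, V \ V_{≥t})| / 2`. -/
theorem median_expansion {V : Type*} [Fintype V] [DecidableEq V]
    (G : SimpleGraph V) [DecidableRel G.Adj]
    (hdeg : ∀ v : V, 1 ≤ G.degree v)
    (p : V → ℝ) (t tmed : ℝ) (ht : tmed < t)
    (hhalf : cutBetween G (levelSet G p t) (levelSet G p t)ᶜ ≤
      2 * cutBetween G (levelSet G p t) ((levelSet G p t)ᶜ ∩ levelSet G p tmed)) :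
    (gVol G (levelSet G p t) : ℝ) +
      (cutBetween G (levelSet G p t) (levelSet G p t)ᶜ : ℝ) / 2 ≤
      (gVol G (levelSet G p tmed) : ℝ) := by
  have hsub : levelSet G p t ⊆ levelSet G p tmed := by
    intro x hx
    simp only [levelSet, Finset.mem_filter, Finset.mem_univ, true_and] at hx ⊢
    linarith
  have h1 := cutBetween_le_gVol_aux G (levelSet G p t) ((levelSet G p t)ᶜ ∩ levelSet G p tmed)
  have h2 : gVol G ((levelSet G p t)ᶜ ∩ levelSet G p tmed) + gVol G (levelSet G p t)
      = gVol G (levelSet G p tmed) := by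
    have e : (levelSet G p t)ᶜ ∩ levelSet G p tmed = levelSet G p tmed \ levelSet G p t := by
      ext x
      simp [and_comm]
    rw [e]
    exact Finset.sum_sdiff hsub
  have h3 : 2 * gVol G (levelSet G p t) + cutBetween G (levelSet G p t) (levelSet G p t)ᶜ
      ≤ 2 * gVol G (levelSet G p tmed) := by omega
  have h4 : (2 : ℝ) * gVol G (levelSet G p t) + cutBetween G (levelSet G p t) (levelSet G p t)ᶜ
      ≤ 2 * gVol G (levelSet G p tmed) := by exact_mod_cast h3
  linarith
end

section
/- Let G = (V,E) be a finite graph with m ≥ 1 edges, let p : V → ℝ_{≥0} satisfy Σ_{v∈V} p(v) = 1, and let C ⊆ V satisfy vol(C) ≤ m and p(C) ≥ 1 − 1/200, where p(U) = Σ_{v∈U} p(v). Define the excess exc(v) = p(v) − deg(v)/(2m) and let S = {v ∈ V : exc(v) ≥ deg(v)/(100m)}. Then Σ_{v∈S} exc(v) ≥ 1/10 and vol(S) ≤ 1.5·m. -/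
/-- The excess of vertex `v` with respect to `p`: `exc(v) = p(v) − deg(v)/(2m)`. -/
noncomputable def exc {V : Type*} [Fintype V] [DecidableEq V] (G : SimpleGraph V)
    [DecidableRel G.Adj] (p : V → ℝ) (v : V) : ℝ :=
  p v - (G.degree v : ℝ) / (2 * (G.edgeFinset.card : ℝ))

/-- The set `S = {v : exc(v) ≥ deg(v)/(100 m)}`. -/
noncomputable def excSet {V : Type*} [Fintype V] [DecidableEq V] (G : SimpleGraph V)
    [DecidableRel G.Adj] (p : V → ℝ) : Finset V :=
  Finset.univ.filter
    (fun v => (G.degree v : ℝ) / (100 * (G.edgeFinset.card : ℝ)) ≤ exc G p v)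

/-- Let `G` have `m ≥ 1` edges, let `p : V → ℝ≥0` with `Σ p = 1`, and suppose
`C ⊆ V` satisfies `vol C ≤ m` and `p(C) ≥ 1 − 1/200`.  Then the set
`S = {v : exc(v) ≥ deg(v)/(100m)}` satisfies `exc(S) ≥ 1/10` and
`vol S ≤ 1.5·m`. -/
theorem big_excess_set {V : Type*} [Fintype V] [DecidableEq V]
    (G : SimpleGraph V) [DecidableRel G.Adj]
    (hm : 1 ≤ G.edgeFinset.card)
    (p : V → ℝ) (hp0 : ∀ v, 0 ≤ p v) (hpsum : ∑ v, p v = 1)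
    (C : Finset V) (hvolC : gVol G C ≤ G.edgeFinset.card)
    (hpC : 1 - 1 / 200 ≤ ∑ v ∈ C, p v) :
    ((1 : ℝ) / 10 ≤ ∑ v ∈ excSet G p, exc G p v) ∧
    ((gVol G (excSet G p) : ℝ) ≤ 1.5 * (G.edgeFinset.card : ℝ)) := by
  have hm0 : (0 : ℝ) < (G.edgeFinset.card : ℝ) := by exact_mod_cast hm
  set m : ℝ := (G.edgeFinset.card : ℝ) with hmdef
  have hvC : ∑ v ∈ C, (G.degree v : ℝ) ≤ m := by
    have h : ((gVol G C : ℕ) : ℝ) ≤ m := Nat.cast_le.2 hvolC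
    simpa [gVol] using h
  have hd0 : ∀ v, (0 : ℝ) ≤ (G.degree v : ℝ) / m := fun v => by positivity
  have hdC : ∑ v ∈ C, (G.degree v : ℝ) / m ≤ 1 := by
    rw [← Finset.sum_div, div_le_one hm0]
    exact hvC
  have hexc : ∀ v, exc G p v = p v - (1 / 2) * ((G.degree v : ℝ) / m) := by
    intro v
    unfold exc
    rw [← hmdef]
    field_simp
  have hS : ∀ v, v ∈ excSet G p ↔ (1 / 100) * ((G.degree v : ℝ) / m) ≤ exc G p v := by
    intro v
    have e : (G.degree v : ℝ) / (100 * m) = (1 / 100) * ((G.degree v : ℝ) / m) := by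
      field_simp
    simp only [excSet, Finset.mem_filter, Finset.mem_univ, true_and]
    rw [← hmdef, e]
  constructor
  · have h1 : ∑ v ∈ C, (p v - (51 / 100) * ((G.degree v : ℝ) / m))
        ≤ ∑ v ∈ excSet G p, exc G p v := by
      rw [← Finset.sum_filter_add_sum_filter_not C (fun v => v ∈ excSet G p)]
      have a : ∑ v ∈ C with v ∉ excSet G p, (p v - (51 / 100) * ((G.degree v : ℝ) / m)) ≤ 0 := by
        apply Finset.sum_nonpos
        intro v hv
        have h := (Finset.mem_filter.1 hv).2
        rw [hS, hexc] at h
        linarith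
      have b : ∑ v ∈ C with v ∈ excSet G p, (p v - (51 / 100) * ((G.degree v : ℝ) / m))
          ≤ ∑ v ∈ C with v ∈ excSet G p, exc G p v := by
        apply Finset.sum_le_sum
        intro v _
        rw [hexc]
        linarith [hd0 v]
      have c : ∑ v ∈ C with v ∈ excSet G p, exc G p v ≤ ∑ v ∈ excSet G p, exc G p v := by
        apply Finset.sum_le_sum_of_subset_of_nonneg
        · intro v hv
          exact (Finset.mem_filter.1 hv).2
        · intro v hv _
          linarith [(hS v).1 hv, hd0 v]
      linarith
    rw [Finset.sum_sub_distrib, ← Finset.mul_sum] at h1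
    linarith
  · have hout : ∑ v ∈ Finset.univ \ C, p v ≤ 1 / 200 := by
      have := Finset.sum_sdiff (f := p) (Finset.subset_univ C)
      linarith
    have h2 : ∑ v ∈ excSet G p, (G.degree v : ℝ) / m
        ≤ ∑ v ∈ C, (G.degree v : ℝ) / m + ∑ v ∈ Finset.univ \ C, 2 * p v := by
      rw [← Finset.sum_filter_add_sum_filter_not (excSet G p) (fun v => v ∈ C)]
      apply add_le_add
      · apply Finset.sum_le_sum_of_subset_of_nonneg
        · intro v hv
          exact (Finset.mem_filter.1 hv).2
        · intro v _ _
          exact hd0 v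
      · refine le_trans (Finset.sum_le_sum (g := fun v => 2 * p v) ?_) ?_
        · intro v hv
          have h := (Finset.mem_filter.1 hv).1
          rw [hS, hexc] at h
          linarith [hd0 v]
        · apply Finset.sum_le_sum_of_subset_of_nonneg
          · intro v hv
            simpa using (Finset.mem_filter.1 hv).2
          · intro v _ _
            linarith [hp0 v]
    rw [← Finset.mul_sum] at h2
    have h3 : (∑ v ∈ excSet G p, (G.degree v : ℝ)) / m ≤ 1.5 := by
      rw [Finset.sum_div]
      norm_num
      linarith
    rw [div_le_iff₀ hm0] at h3
    simpa [gVol] using h3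
end

section
/- Let G = (V,E) be a finite graph with m ≥ 1 edges in which every vertex has degree at least 1, let p : V → ℝ_{≥0} satisfy Σ_{v∈V} p(v) ≤ 1, define exc(v) = p(v) − deg(v)/(2m), and let S = {v ∈ V : exc(v) ≥ deg(v)/(100m)}. Suppose Σ_{v∈S} exc(v) ≥ 1/10. For each positive integer i let B_i = {v ∈ S : 2^{−i} < exc(v)/deg(v) ≤ 2^{−i+1}}. Then there exists an integer i with 1 ≤ i ≤ ⌊log₂(50m)⌋ such that Σ_{v∈B_i} exc(v) ≥ 1/(50·⌊log₂(50m)⌋) and Σ_{v∈B_i} deg(v) ≥ 2^{i−1}/(50·⌊log₂(50m)⌋). -/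
/-- The bucket `B_i = {v ∈ S : 2^{−i} < exc(v)/deg(v) ≤ 2^{−i+1}}`. -/
noncomputable def excBucket {V : Type*} [Fintype V] [DecidableEq V] (G : SimpleGraph V)
    [DecidableRel G.Adj] (p : V → ℝ) (i : ℕ) : Finset V :=
  (excSet G p).filter
    (fun v => ((2 : ℝ) ^ i)⁻¹ < exc G p v / (G.degree v : ℝ) ∧
      exc G p v / (G.degree v : ℝ) ≤ ((2 : ℝ) ^ (i - 1))⁻¹)

theorem bucket_index (r : ℝ) (h1 : r ≤ 1) (L : ℕ) (h : ((2 : ℝ) ^ L)⁻¹ < r) :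
    ∃ i ∈ Finset.Icc 1 L, ((2 : ℝ) ^ i)⁻¹ < r ∧ r ≤ ((2 : ℝ) ^ (i - 1))⁻¹ := by
  induction L with
  | zero => norm_num at h; linarith
  | succ k ih =>
    by_cases hk : ((2 : ℝ) ^ k)⁻¹ < r
    · obtain ⟨i, hi, h2⟩ := ih hk
      rw [Finset.mem_Icc] at hi
      exact ⟨i, Finset.mem_Icc.mpr ⟨hi.1, by omega⟩, h2⟩
    · exact ⟨k + 1, Finset.mem_Icc.mpr ⟨by omega, le_rfl⟩, h, by simpa using hk⟩

/-- **A good excess bucket exists.**  Let `G` have `m ≥ 1` edges and minimum degree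
at least `1`, let `p : V → ℝ≥0` with `Σ p ≤ 1`, and suppose the set
`S = {v : exc(v) ≥ deg(v)/(100m)}` satisfies `exc(S) ≥ 1/10`.  Then there is an
integer `1 ≤ i ≤ ⌊log₂(50m)⌋` with `exc(B_i) ≥ 1/(50·⌊log₂(50m)⌋)` and
`vol(B_i) ≥ 2^{i−1}/(50·⌊log₂(50m)⌋)`. -/
theorem good_bucket_exists {V : Type*} [Fintype V] [DecidableEq V]
    (G : SimpleGraph V) [DecidableRel G.Adj]
    (hm : 1 ≤ G.edgeFinset.card)
    (hdeg : ∀ v : V, 1 ≤ G.degree v)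
    (p : V → ℝ) (hp0 : ∀ v, 0 ≤ p v) (hpsum : ∑ v, p v ≤ 1)
    (hS : (1 : ℝ) / 10 ≤ ∑ v ∈ excSet G p, exc G p v) :
    ∃ i : ℕ, 1 ≤ i ∧ i ≤ Nat.log 2 (50 * G.edgeFinset.card) ∧
      (1 / (50 * (Nat.log 2 (50 * G.edgeFinset.card) : ℝ)) ≤
        ∑ v ∈ excBucket G p i, exc G p v) ∧
      ((2 : ℝ) ^ (i - 1) / (50 * (Nat.log 2 (50 * G.edgeFinset.card) : ℝ)) ≤
        ∑ v ∈ excBucket G p i, (G.degree v : ℝ)) := by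
  set m := G.edgeFinset.card with hmdef
  set L := Nat.log 2 (50 * m) with hL
  have hmR : (1 : ℝ) ≤ m := by exact_mod_cast hm
  have hd : ∀ v, (1 : ℝ) ≤ G.degree v := fun v => by exact_mod_cast hdeg v
  have hL1 : 1 ≤ L := by
    rw [hL]
    exact Nat.log_pos (by norm_num) (by omega)
  have hLR : (1 : ℝ) ≤ L := by exact_mod_cast hL1
  have hlt : (50 * m : ℝ) < 2 ^ L * 2 := by
    have := Nat.lt_pow_succ_log_self (b := 2) (by norm_num) (50 * m)
    rw [← hL, Nat.succ_eq_add_one, pow_succ] at this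
    exact_mod_cast this
  have hpL : (0 : ℝ) < 2 ^ L := by positivity
  have hpos : ∀ v ∈ excSet G p, 0 ≤ exc G p v := by
    intro v hv
    have := (Finset.mem_filter.mp hv).2
    exact le_trans (by positivity) this
  have hr1 : ∀ v, exc G p v / (G.degree v : ℝ) ≤ 1 := by
    intro v
    have h1 : p v ≤ ∑ v, p v := Finset.single_le_sum (fun v _ => hp0 v) (Finset.mem_univ v)
    have h2 : exc G p v ≤ p v := by
      unfold exc
      have : 0 ≤ (G.degree v : ℝ) / (2 * (G.edgeFinset.card : ℝ)) := by positivity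
      linarith
    have := hd v
    rw [div_le_one (by linarith)]
    linarith
  have hvert : ∀ v ∈ excSet G p, exc G p v ≤ (G.degree v : ℝ) / 2 ^ L +
      ∑ i ∈ Finset.Icc 1 L, (if ((2 : ℝ) ^ i)⁻¹ < exc G p v / (G.degree v : ℝ) ∧
      exc G p v / (G.degree v : ℝ) ≤ ((2 : ℝ) ^ (i - 1))⁻¹ then exc G p v else 0) := by
    intro v hv
    have h0 := hpos v hv
    have hdv := hd v
    have hnn : ∀ i ∈ Finset.Icc 1 L, 0 ≤ (if ((2 : ℝ) ^ i)⁻¹ < exc G p v / (G.degree v : ℝ) ∧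
      exc G p v / (G.degree v : ℝ) ≤ ((2 : ℝ) ^ (i - 1))⁻¹ then exc G p v else 0) := by
      intro i _
      split_ifs <;> simp [h0]
    by_cases hc : ((2 : ℝ) ^ L)⁻¹ < exc G p v / (G.degree v : ℝ)
    · obtain ⟨i, hi, h2⟩ := bucket_index _ (hr1 v) L hc
      have h3 := Finset.single_le_sum hnn hi
      rw [if_pos h2] at h3
      have : 0 ≤ (G.degree v : ℝ) / 2 ^ L := by positivity
      linarith
    · have h3 := Finset.sum_nonneg hnn
      rw [not_lt, div_le_iff₀ (by linarith)] at hc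
      have : ((2 : ℝ) ^ L)⁻¹ * (G.degree v : ℝ) = (G.degree v : ℝ) / 2 ^ L := by
        rw [div_eq_mul_inv, mul_comm]
      linarith
  have hsum := Finset.sum_le_sum hvert
  rw [Finset.sum_add_distrib, Finset.sum_comm, ← Finset.sum_div] at hsum
  have hvol : ∑ v ∈ excSet G p, (G.degree v : ℝ) ≤ 2 * m := by
    have h1 : ∑ v ∈ excSet G p, (G.degree v : ℝ) ≤ ∑ v, (G.degree v : ℝ) :=
      Finset.sum_le_sum_of_subset_of_nonneg (Finset.subset_univ _) (fun _ _ _ => by positivity)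
    have h2 : ∑ v, (G.degree v : ℝ) = 2 * m := by
      exact_mod_cast G.sum_degrees_eq_twice_card_edges
    linarith
  have hvol2 : (∑ v ∈ excSet G p, (G.degree v : ℝ)) / 2 ^ L ≤ 2 / 25 := by
    rw [div_le_iff₀ hpL]
    linarith
  have hB : ∀ i, ∑ v ∈ excSet G p, (if ((2 : ℝ) ^ i)⁻¹ < exc G p v / (G.degree v : ℝ) ∧
      exc G p v / (G.degree v : ℝ) ≤ ((2 : ℝ) ^ (i - 1))⁻¹ then exc G p v else 0)
      = ∑ v ∈ excBucket G p i, exc G p v := by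
    intro i
    rw [excBucket, Finset.sum_filter]
  simp only [hB] at hsum
  have hex : ∃ i ∈ Finset.Icc 1 L, 1 / (50 * (L : ℝ)) ≤ ∑ v ∈ excBucket G p i, exc G p v := by
    apply Finset.exists_le_of_sum_le (Finset.nonempty_Icc.mpr hL1)
    rw [Finset.sum_const, Nat.card_Icc, nsmul_eq_mul]
    have : ((L + 1 - 1 : ℕ) : ℝ) * (1 / (50 * (L : ℝ))) = 1 / 50 := by
      rw [Nat.add_sub_cancel]
      field_simp
    rw [this]
    linarith
  obtain ⟨i, hi, h⟩ := hex
  rw [Finset.mem_Icc] at hi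
  refine ⟨i, hi.1, hi.2, h, ?_⟩
  have hp : (0 : ℝ) < 2 ^ (i - 1) := by positivity
  have hle : 2 ^ (i - 1) * ∑ v ∈ excBucket G p i, exc G p v
      ≤ ∑ v ∈ excBucket G p i, (G.degree v : ℝ) := by
    rw [Finset.mul_sum]
    apply Finset.sum_le_sum
    intro v hv
    have h2 := (Finset.mem_filter.mp hv).2.2
    have hdv := hd v
    rw [div_le_iff₀ (by linarith), inv_mul_eq_div, le_div_iff₀ hp] at h2
    linarith
  refine le_trans ?_ hle
  rw [div_eq_mul_one_div]
  exact mul_le_mul_of_nonneg_left h hp.le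
end
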